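/- arXiv:2108.08588 — 2 statements merged into one kernel-verified Lean document; each statement's English description precedes it below -/
import Mathlib

section
/- For the prism allied graph D_n^t with n ≥ 4, the mixed metric dimension equals n + 1. -/
/-- Vertices of the prism allied graph `Dₙᵗ`. -/
inductive DtV (n : ℕ) : Type
  | p : Fin n → DtV n
  | q : Fin n → DtV n
  | r : Fin n → DtV n
  | s : Fin n → DtV n
  deriving DecidableEq


/-- Cyclic successor on `Fin n` (indices mod `n`). -/
def finSucc {n : ℕ} (i : Fin n) : Fin n :=
  ⟨(i.val + 1) % n, Nat.mod_lt _ (Nat.lt_of_le_of_lt (Nat.zero_le _) i.isLt)⟩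

/-- Base relation for the edges of the prism allied graph. -/
def DtRel (n : ℕ) : DtV n → DtV n → Prop := fun a b =>
  ∃ i : Fin n,
    (a = .p i ∧ b = .q i) ∨ (a = .p i ∧ b = .p (finSucc i)) ∨
    (a = .q i ∧ b = .q (finSucc i)) ∨ (a = .r i ∧ b = .q i) ∨
    (a = .r i ∧ b = .q (finSucc i)) ∨ (a = .r i ∧ b = .s i)

/-- The prism allied graph `Dₙᵗ`. -/
def Dt (n : ℕ) : SimpleGraph (DtV n) := SimpleGraph.fromRel (DtRel n)

/-- Vertices of the web graph `Wₙ`. -/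
inductive WV (n : ℕ) : Type
  | p : Fin n → WV n
  | q : Fin n → WV n
  | r : Fin n → WV n
  deriving DecidableEq

/-- Base relation for the edges of the web graph. -/
def WRel (n : ℕ) : WV n → WV n → Prop := fun a b =>
  ∃ i : Fin n,
    (a = .p i ∧ b = .q i) ∨ (a = .p i ∧ b = .p (finSucc i)) ∨
    (a = .q i ∧ b = .q (finSucc i)) ∨ (a = .q i ∧ b = .r i)

/-- The web graph `Wₙ`. -/
def W (n : ℕ) : SimpleGraph (WV n) := SimpleGraph.fromRel (WRel n)

/-- Distance from a vertex to an (unordered) edge: `d(x, uv) = min (d x u) (d x v)`. -/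
noncomputable def edgeDist {V : Type*} (G : SimpleGraph V) (w : V) (e : Sym2 V) : ℕ :=
  Sym2.lift ⟨fun u v => min (G.dist w u) (G.dist w v), fun u v => min_comm _ _⟩ e

/-- Distance from a vertex to a mixed element (a vertex or an edge). -/
noncomputable def mixedDist {V : Type*} (G : SimpleGraph V) (w : V) :
    V ⊕ G.edgeSet → ℕ :=
  Sum.elim (G.dist w) (fun e => edgeDist G w e.1)

/-- `M` is a mixed metric generator: every two distinct elements of `V(G) ∪ E(G)` are
distinguished by some vertex of `M`. -/
def IsMixedMetricGen {V : Type*} (G : SimpleGraph V) (M : Set V) : Prop :=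
  ∀ a b : V ⊕ G.edgeSet, a ≠ b → ∃ w ∈ M, mixedDist G w a ≠ mixedDist G w b

/-- `M` is a (vertex) resolving set. -/
def IsResolving {V : Type*} (G : SimpleGraph V) (M : Set V) : Prop :=
  ∀ a b : V, a ≠ b → ∃ w ∈ M, G.dist w a ≠ G.dist w b

/-- `M` is an edge resolving set. -/
def IsEdgeResolving {V : Type*} (G : SimpleGraph V) (M : Set V) : Prop :=
  ∀ a b : G.edgeSet, a ≠ b → ∃ w ∈ M, edgeDist G w a.1 ≠ edgeDist G w b.1

/-- The metric dimension of `G`. -/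
noncomputable def metricDim {V : Type*} (G : SimpleGraph V) : ℕ :=
  sInf {k | ∃ M : Set V, IsResolving G M ∧ M.ncard = k}

/-- The edge metric dimension of `G`. -/
noncomputable def edgeMetricDim {V : Type*} (G : SimpleGraph V) : ℕ :=
  sInf {k | ∃ M : Set V, IsEdgeResolving G M ∧ M.ncard = k}

/-- The mixed metric dimension of `G`. -/
noncomputable def mixedMetricDim {V : Type*} (G : SimpleGraph V) : ℕ :=
  sInf {k | ∃ M : Set V, IsMixedMetricGen G M ∧ M.ncard = k}


namespace DtProof

open DtV

/-- The ten kinds of elements (vertices and edges). -/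
inductive E (n : ℕ) : Type
  | p : Fin n → E n
  | q : Fin n → E n
  | r : Fin n → E n
  | s : Fin n → E n
  | pq : Fin n → E n
  | pp : Fin n → E n
  | qq : Fin n → E n
  | rq : Fin n → E n
  | rt : Fin n → E n
  | rs : Fin n → E n

/-- The element of `V ⊕ Sym2 V` described by a code. -/
def enc {n : ℕ} : E n → DtV n ⊕ Sym2 (DtV n)
  | .p i => .inl (.p i)
  | .q i => .inl (.q i)
  | .r i => .inl (.r i)
  | .s i => .inl (.s i)
  | .pq i => .inr s(.p i, .q i)
  | .pp i => .inr s(.p i, .p (finSucc i))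
  | .qq i => .inr s(.q i, .q (finSucc i))
  | .rq i => .inr s(.r i, .q i)
  | .rt i => .inr s(.r i, .q (finSucc i))
  | .rs i => .inr s(.r i, .s i)

/-- Value of a vertex function on a code. -/
def val {n : ℕ} (d : DtV n → ℕ) : E n → ℕ
  | .p i => d (.p i)
  | .q i => d (.q i)
  | .r i => d (.r i)
  | .s i => d (.s i)
  | .pq i => min (d (.p i)) (d (.q i))
  | .pp i => min (d (.p i)) (d (.p (finSucc i)))
  | .qq i => min (d (.q i)) (d (.q (finSucc i)))
  | .rq i => min (d (.r i)) (d (.q i))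
  | .rt i => min (d (.r i)) (d (.q (finSucc i)))
  | .rs i => min (d (.r i)) (d (.s i))

lemma finSucc_ne {n : ℕ} (hn : 4 ≤ n) (i : Fin n) : finSucc i ≠ i := by
  intro h
  have h1 := congrArg Fin.val h
  have hi := i.isLt
  simp only [finSucc] at h1
  rcases Nat.lt_or_ge (i.val + 1) n with h2 | h2
  · rw [Nat.mod_eq_of_lt h2] at h1; omega
  · have : i.val + 1 = n := by omega
    rw [this, Nat.mod_self] at h1; omega

lemma near_iff {n : ℕ} (i j : Fin n) : i = finSucc j ↔
    (j.val + 1 = i.val ∨ (j.val + 1 = n ∧ i.val = 0)) := by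
  have hi := i.isLt
  have hj := j.isLt
  rw [Fin.ext_iff]
  simp only [finSucc]
  rcases Nat.lt_or_ge (j.val + 1) n with h2 | h2
  · rw [Nat.mod_eq_of_lt h2]; omega
  · have : j.val + 1 = n := by omega
    rw [this, Nat.mod_self]; omega

lemma finSucc_inj {n : ℕ} {i j : Fin n} (h : finSucc i = finSucc j) : i = j := by
  have h1 := (near_iff (finSucc i) i).1 rfl
  have h2 := (near_iff (finSucc i) j).1 h
  have := i.isLt
  have := j.isLt
  ext; omega

lemma exists_pred {n : ℕ} (i : Fin n) : ∃ j : Fin n, finSucc j = i :=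
  (Finite.injective_iff_surjective.1 (fun _ _ h => finSucc_inj h)) i

section adj
variable {n : ℕ} (i : Fin n)
lemma adj_pq : (Dt n).Adj (.p i) (.q i) := by
  simp [Dt, SimpleGraph.fromRel_adj, DtRel]
lemma adj_pp (hn : 4 ≤ n) : (Dt n).Adj (.p i) (.p (finSucc i)) := by
  have := finSucc_ne hn i
  simp [Dt, SimpleGraph.fromRel_adj, DtRel, this.symm]
lemma adj_qq (hn : 4 ≤ n) : (Dt n).Adj (.q i) (.q (finSucc i)) := by
  have := finSucc_ne hn i
  simp [Dt, SimpleGraph.fromRel_adj, DtRel, this.symm]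
lemma adj_rq : (Dt n).Adj (.r i) (.q i) := by
  simp [Dt, SimpleGraph.fromRel_adj, DtRel]
lemma adj_rt : (Dt n).Adj (.r i) (.q (finSucc i)) := by
  rw [Dt, SimpleGraph.fromRel_adj]
  exact ⟨by simp, .inl ⟨i, by simp⟩⟩
lemma adj_rs : (Dt n).Adj (.r i) (.s i) := by
  simp [Dt, SimpleGraph.fromRel_adj, DtRel]
end adj

/-- A vertex function that is 1-Lipschitz along the edges. -/
def Lip {n : ℕ} (f : DtV n → ℕ) : Prop :=
  ∀ i : Fin n, (f (.p i) ≤ f (.q i) + 1 ∧ f (.q i) ≤ f (.p i) + 1) ∧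
    (f (.p i) ≤ f (.p (finSucc i)) + 1 ∧ f (.p (finSucc i)) ≤ f (.p i) + 1) ∧
    (f (.q i) ≤ f (.q (finSucc i)) + 1 ∧ f (.q (finSucc i)) ≤ f (.q i) + 1) ∧
    (f (.r i) ≤ f (.q i) + 1 ∧ f (.q i) ≤ f (.r i) + 1) ∧
    (f (.r i) ≤ f (.q (finSucc i)) + 1 ∧ f (.q (finSucc i)) ≤ f (.r i) + 1) ∧
    (f (.r i) ≤ f (.s i) + 1 ∧ f (.s i) ≤ f (.r i) + 1)

lemma Lip.adj {n : ℕ} {f : DtV n → ℕ} (hf : Lip f) {u v : DtV n} (h : (Dt n).Adj u v) :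
    f v ≤ f u + 1 := by
  rw [Dt, SimpleGraph.fromRel_adj] at h
  obtain ⟨-, ⟨i, h⟩ | ⟨i, h⟩⟩ := h <;> have := hf i <;>
  rcases h with ⟨rfl, rfl⟩ | ⟨rfl, rfl⟩ | ⟨rfl, rfl⟩ | ⟨rfl, rfl⟩ | ⟨rfl, rfl⟩ | ⟨rfl, rfl⟩ <;>
  omega

lemma connected {n : ℕ} (hn : 4 ≤ n) : (Dt n).Connected := by
  have hp : ∀ k (hk : k < n), (Dt n).Reachable (.p ⟨0, by omega⟩) (.p ⟨k, hk⟩) := by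
    intro k
    induction k with
    | zero => intro hk; exact SimpleGraph.Reachable.refl _
    | succ k ih =>
      intro hk
      refine (ih (by omega)).trans ?_
      have h := adj_pp (⟨k, by omega⟩ : Fin n) hn
      have e : finSucc (⟨k, by omega⟩ : Fin n) = ⟨k+1, hk⟩ := by
        symm; rw [near_iff]; simp
      rw [e] at h
      exact h.reachable
  have hall : ∀ v, (Dt n).Reachable (.p ⟨0, by omega⟩) v := by
    intro v
    have hq : ∀ i : Fin n, (Dt n).Reachable (.p ⟨0, by omega⟩) (.q i) := fun i =>
      (hp i i.2).trans (adj_pq i).reachable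
    have hr : ∀ i : Fin n, (Dt n).Reachable (.p ⟨0, by omega⟩) (.r i) := fun i =>
      (hq i).trans (adj_rq i).symm.reachable
    cases v with
    | p i => exact hp i i.2
    | q i => exact hq i
    | r i => exact hr i
    | s i => exact (hr i).trans (adj_rs i).reachable
  have : Nonempty (DtV n) := ⟨.p ⟨0, by omega⟩⟩
  exact SimpleGraph.Connected.mk fun u v => (hall u).symm.trans (hall v)

lemma Lip.le_dist {n : ℕ} (hn : 4 ≤ n) {f : DtV n → ℕ} (hf : Lip f) {w : DtV n} (hw : f w = 0)
    (u : DtV n) : f u ≤ (Dt n).dist w u := by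
  obtain ⟨P, hP⟩ := (connected hn).exists_walk_length_eq_dist w u
  rw [← hP]
  have key : ∀ (a b : DtV n) (P : (Dt n).Walk a b), f b ≤ f a + P.length := by
    intro a b P
    induction P with
    | nil => simp
    | cons h P ih => have := hf.adj h; simp only [SimpleGraph.Walk.length_cons]; omega
  have := key _ _ P
  omega

lemma dist_adj {n : ℕ} (hn : 4 ≤ n) (w : DtV n) {u v : DtV n} (h : (Dt n).Adj u v) :
    (Dt n).dist w u ≤ (Dt n).dist w v + 1 := by
  have h1 := (connected hn).dist_triangle (u := w) (v := v) (w := u)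
  rw [SimpleGraph.dist_eq_one_iff_adj.2 h.symm] at h1
  exact h1

lemma lip_dist {n : ℕ} (hn : 4 ≤ n) (w : DtV n) : Lip ((Dt n).dist w) := by
  intro i
  have h := fun {u v} => @dist_adj n hn w u v
  exact ⟨⟨h (adj_pq i), h (adj_pq i).symm⟩, ⟨h (adj_pp i hn), h (adj_pp i hn).symm⟩,
    ⟨h (adj_qq i hn), h (adj_qq i hn).symm⟩, ⟨h (adj_rq i), h (adj_rq i).symm⟩,
    ⟨h (adj_rt i), h (adj_rt i).symm⟩, ⟨h (adj_rs i), h (adj_rs i).symm⟩⟩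

/-- From a vertex other than `s i`, the pendant `s i` is one further than `r i`. -/
lemma dist_s {n : ℕ} (hn : 4 ≤ n) (w : DtV n) (i : Fin n) (hw : w ≠ .s i) :
    (Dt n).dist w (.s i) = (Dt n).dist w (.r i) + 1 := by
  have hd := lip_dist hn w
  refine le_antisymm (hd i).2.2.2.2.2.2 ?_
  let f : DtV n → ℕ := Function.update ((Dt n).dist w) (.s i) ((Dt n).dist w (.r i) + 1)
  have hf : Lip f := by
    intro k
    have hk := hd k
    by_cases hki : k = i
    · subst hki
      simp only [f, Function.update_self, Function.update_of_ne, ne_eq, reduceCtorEq,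
        not_false_eq_true]
      omega
    · have : (DtV.s k : DtV n) ≠ .s i := by simpa using hki
      simp only [f, Function.update_of_ne this, Function.update_of_ne, ne_eq, reduceCtorEq,
        not_false_eq_true]
      omega
  have := hf.le_dist hn (w := w) (by simp [f, Function.update_of_ne hw]) (.s i)
  simpa [f] using this

/-- From `s j`, the vertex `p i` is one further than `q i`. -/
lemma dist_s_p {n : ℕ} (hn : 4 ≤ n) (i j : Fin n) :
    (Dt n).dist (.s j) (.p i) = (Dt n).dist (.s j) (.q i) + 1 := by
  have hd := lip_dist hn (.s j)
  refine le_antisymm (hd i).1.1 ?_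
  let f : DtV n → ℕ := fun v => match v with
    | .p i => (Dt n).dist (.s j) (.q i) + 1
    | v => (Dt n).dist (.s j) v
  have hf : Lip f := by
    intro k
    have hk := hd k
    simp only [f]
    omega
  exact hf.le_dist hn (w := .s j) (by simp [f]) (.p i)

/-- From `p j`, the vertex `q i` is one further than `p i`. -/
lemma dist_p_q {n : ℕ} (hn : 4 ≤ n) (i j : Fin n) :
    (Dt n).dist (.p j) (.q i) = (Dt n).dist (.p j) (.p i) + 1 := by
  have hd := lip_dist hn (.p j)
  refine le_antisymm (hd i).1.2 ?_
  let f : DtV n → ℕ := fun v => match v with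
    | .p i => (Dt n).dist (.p j) (.p i)
    | .q i => (Dt n).dist (.p j) (.p i) + 1
    | .r i => min ((Dt n).dist (.p j) (.p i)) ((Dt n).dist (.p j) (.p (finSucc i))) + 2
    | .s i => min ((Dt n).dist (.p j) (.p i)) ((Dt n).dist (.p j) (.p (finSucc i))) + 3
  have hf : Lip f := by
    intro k
    have hk := hd k
    simp only [f]
    omega
  exact hf.le_dist hn (w := .p j) (by simp [f]) (.q i)

lemma local_lower {n : ℕ} (hn : 4 ≤ n) (i j : Fin n) :
    (i ≠ j → 3 ≤ (Dt n).dist (.s j) (.r i)) ∧ (1 ≤ (Dt n).dist (.s j) (.r i)) ∧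
    (i ≠ j → i ≠ finSucc j → 3 ≤ (Dt n).dist (.s j) (.q i)) ∧
    2 ≤ (Dt n).dist (.s j) (.q i) := by
  let f : DtV n → ℕ := fun v => match v with
    | .p _ => 3
    | .q i => if i = j ∨ i = finSucc j then 2 else 3
    | .r i => if i = j then 1 else 3
    | .s i => if i = j then 0 else 3
  have hf : Lip f := by
    intro k
    by_cases h : k = j
    · subst h
      simp only [f]; simp
    · simp only [f, h, if_false]
      refine ⟨?_, ?_, ?_, ?_, ?_, ?_⟩ <;> constructor <;> (try split_ifs) <;> omega
  have key := hf.le_dist hn (w := .s j) (by simp [f])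
  have h1 := key (.r i)
  have h2 := key (.q i)
  simp only [f] at h1 h2
  refine ⟨?_, ?_, ?_, ?_⟩
  · intro h; simpa [h] using h1
  · split_ifs at h1 <;> omega
  · intro h h'; simpa [h, h'] using h2
  · split_ifs at h2 <;> omega

lemma local_r {n : ℕ} (hn : 4 ≤ n) (i j : Fin n) :
    (i.val = j.val ∧ (Dt n).dist (.s j) (.r i) = 1) ∨
    (i.val ≠ j.val ∧ 3 ≤ (Dt n).dist (.s j) (.r i)) := by
  have h := local_lower hn i j
  by_cases e : i = j
  · subst e
    have := (lip_dist hn (.s i) i).2.2.2.2.2.1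
    rw [SimpleGraph.dist_self] at this
    left; omega
  · right; exact ⟨fun h => e (Fin.ext h), h.1 e⟩

lemma local_s {n : ℕ} (hn : 4 ≤ n) (i j : Fin n) :
    (i.val = j.val ∧ (Dt n).dist (.s j) (.s i) = 0) ∨
    (i.val ≠ j.val ∧ (Dt n).dist (.s j) (.s i) = (Dt n).dist (.s j) (.r i) + 1) := by
  by_cases e : i = j
  · subst e; simp
  · right; exact ⟨fun h => e (Fin.ext h), dist_s hn _ _ (by simpa using Ne.symm e)⟩

lemma local_q {n : ℕ} (hn : 4 ≤ n) (i j : Fin n) :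
    ((i.val = j.val ∨ (j.val + 1 = i.val ∨ (j.val + 1 = n ∧ i.val = 0))) ∧
      (Dt n).dist (.s j) (.q i) = 2) ∨
    (¬ (i.val = j.val ∨ (j.val + 1 = i.val ∨ (j.val + 1 = n ∧ i.val = 0))) ∧
      3 ≤ (Dt n).dist (.s j) (.q i)) := by
  have h := local_lower hn i j
  have hj := local_r hn j j
  have hl := lip_dist hn (.s j) j
  rw [← near_iff, ← Fin.ext_iff]
  by_cases e : i = j
  · subst e; left; refine ⟨.inl rfl, ?_⟩; omega
  · by_cases e' : i = finSucc j
    · subst e'; left; refine ⟨.inr rfl, ?_⟩; omega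
    · right; exact ⟨by tauto, h.2.2.1 e e'⟩

lemma exists_code {n : ℕ} (a : DtV n ⊕ (Dt n).edgeSet) :
    ∃ k : E n, Sum.map id Subtype.val a = enc k := by
  rcases a with v | ⟨e, he⟩
  · cases v with
    | p i => exact ⟨.p i, rfl⟩
    | q i => exact ⟨.q i, rfl⟩
    | r i => exact ⟨.r i, rfl⟩
    | s i => exact ⟨.s i, rfl⟩
  · induction e using Sym2.ind with
    | _ u v =>
    rw [SimpleGraph.mem_edgeSet, Dt, SimpleGraph.fromRel_adj] at he
    obtain ⟨-, ⟨i, h⟩ | ⟨i, h⟩⟩ := he <;>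
    rcases h with ⟨rfl, rfl⟩ | ⟨rfl, rfl⟩ | ⟨rfl, rfl⟩ | ⟨rfl, rfl⟩ | ⟨rfl, rfl⟩ | ⟨rfl, rfl⟩
    · exact ⟨.pq i, rfl⟩
    · exact ⟨.pp i, rfl⟩
    · exact ⟨.qq i, rfl⟩
    · exact ⟨.rq i, rfl⟩
    · exact ⟨.rt i, rfl⟩
    · exact ⟨.rs i, rfl⟩
    · exact ⟨.pq i, by simp [enc, Sym2.eq_swap]⟩
    · exact ⟨.pp i, by simp [enc, Sym2.eq_swap]⟩
    · exact ⟨.qq i, by simp [enc, Sym2.eq_swap]⟩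
    · exact ⟨.rq i, by simp [enc, Sym2.eq_swap]⟩
    · exact ⟨.rt i, by simp [enc, Sym2.eq_swap]⟩
    · exact ⟨.rs i, by simp [enc, Sym2.eq_swap]⟩

lemma mixedDist_code {n : ℕ} (w : DtV n) (a : DtV n ⊕ (Dt n).edgeSet) (k : E n)
    (h : Sum.map id Subtype.val a = enc k) : mixedDist (Dt n) w a = val ((Dt n).dist w) k := by
  rcases a with v | ⟨e, he⟩
  · cases k <;> simp only [enc, Sum.map_inl, Sum.inl.injEq, reduceCtorEq, id] at h <;> subst h <;> rfl
  · cases k <;> simp only [enc, Sum.map_inr, Sum.inr.injEq, reduceCtorEq] at h <;> subst h <;> rfl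

lemma succ_val {n : ℕ} (i : Fin n) : (i.val + 1 = (finSucc i).val ∨
    (i.val + 1 = n ∧ (finSucc i).val = 0)) := (near_iff (finSucc i) i).1 rfl

/-- Minimal distance of a code from the vertices `s j`. -/
def low {n : ℕ} : E n → ℕ
  | .p _ => 3
  | .q _ => 2
  | .r _ => 1
  | .s _ => 0
  | .pq _ => 2
  | .pp _ => 3
  | .qq _ => 2
  | .rq _ => 1
  | .rt _ => 1
  | .rs _ => 0

/-- Number of minimizers minus one. -/
def shape {n : ℕ} : E n → ℕ
  | .p _ => 1
  | .q _ => 1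
  | .r _ => 0
  | .s _ => 0
  | .pq _ => 1
  | .pp _ => 2
  | .qq _ => 2
  | .rq _ => 0
  | .rt _ => 0
  | .rs _ => 0

/-- Index of a code. -/
def idx {n : ℕ} : E n → Fin n
  | .p i | .q i | .r i | .s i | .pq i | .pp i | .qq i | .rq i | .rt i | .rs i => i

/-- The set of minimizers. -/
def Mem {n : ℕ} (t : ℕ) (i j : Fin n) : Prop :=
  j = i ∨ (1 ≤ t ∧ i = finSucc j) ∨ (2 ≤ t ∧ j = finSucc i)

lemma profile {n : ℕ} (hn : 4 ≤ n) (a : E n) (j : Fin n) :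
    low a ≤ val ((Dt n).dist (.s j)) a ∧
    (val ((Dt n).dist (.s j)) a = low a ↔ Mem (shape a) (idx a) j) := by
  unfold Mem
  rw [near_iff, near_iff, Fin.ext_iff]
  have hj := j.isLt
  cases a with
  | p i =>
    have h := local_q hn i j
    simp only [val, low, shape, idx, dist_s_p hn]
    omega
  | q i =>
    have h := local_q hn i j
    simp only [val, low, shape, idx]
    omega
  | r i =>
    have h := local_r hn i j
    simp only [val, low, shape, idx]
    omega
  | s i =>
    have h := local_s hn i j
    simp only [val, low, shape, idx]
    omega
  | pq i =>
    have h := local_q hn i j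
    simp only [val, low, shape, idx, dist_s_p hn]
    omega
  | pp i =>
    have h := local_q hn i j
    have h' := local_q hn (finSucc i) j
    have hi := i.isLt
    have hs := succ_val i
    simp only [val, low, shape, idx, dist_s_p hn]
    omega
  | qq i =>
    have h := local_q hn i j
    have h' := local_q hn (finSucc i) j
    have hi := i.isLt
    have hs := succ_val i
    simp only [val, low, shape, idx]
    omega
  | rq i =>
    have h := local_q hn i j
    have h' := local_r hn i j
    simp only [val, low, shape, idx]
    omega
  | rt i =>
    have h := local_q hn (finSucc i) j
    have h' := local_r hn i j
    simp only [val, low, shape, idx]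
    omega
  | rs i =>
    have h := local_s hn i j
    have h' := local_r hn i j
    simp only [val, low, shape, idx]
    omega

/-- The minimizers determine shape and index. -/
lemma mem_inj {n t u : ℕ} {i k : Fin n} (hn : 4 ≤ n) (ht : t ≤ 2) (hu : u ≤ 2)
    (h : ∀ j, Mem t i j ↔ Mem u k j) : t = u ∧ i = k := by
  have inj : ∀ x y : Fin n, finSucc x = finSucc y → x = y := fun x y => finSucc_inj
  have c1 : ∀ x : Fin n, finSucc x ≠ x := finSucc_ne hn
  have c2 : ∀ x : Fin n, finSucc (finSucc x) ≠ x := by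
    intro x e
    have h1 := succ_val x
    have h2 := succ_val (finSucc x)
    rw [e] at h2
    omega
  have c3 : ∀ x : Fin n, finSucc (finSucc (finSucc x)) ≠ x := by
    intro x e
    have h1 := succ_val x
    have h2 := succ_val (finSucc x)
    have h3 := succ_val (finSucc (finSucc x))
    rw [e] at h3
    omega
  obtain ⟨a, rfl⟩ := exists_pred i
  obtain ⟨c, rfl⟩ := exists_pred k
  have h1 := h a
  have h2 := h (finSucc a)
  have h3 := h (finSucc (finSucc a))
  have h4 := h c
  have h5 := h (finSucc c)
  have h6 := h (finSucc (finSucc c))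
  clear h
  have ht' : t = 0 ∨ t = 1 ∨ t = 2 := by omega
  have hu' : u = 0 ∨ u = 1 ∨ u = 2 := by omega
  unfold Mem at *
  rcases ht' with rfl | rfl | rfl <;> rcases hu' with rfl | rfl | rfl <;> simp at h1 h2 h3 h4 h5 h6 <;>
    grind

lemma code_idx {n : ℕ} (hn : 4 ≤ n) (a b : E n)
    (hs : ∀ j, val ((Dt n).dist (.s j)) a = val ((Dt n).dist (.s j)) b) :
    low a = low b ∧ shape a = shape b ∧ idx a = idx b := by
  have h1 : low a = low b := by
    have h1 := profile hn a (idx a)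
    have h2 := profile hn b (idx a)
    have h3 := profile hn a (idx b)
    have h4 := profile hn b (idx b)
    have h5 := h1.2.2 (.inl rfl)
    have h6 := h4.2.2 (.inl rfl)
    have h7 := hs (idx a)
    have h8 := hs (idx b)
    omega
  have h2 := mem_inj (t := shape a) (u := shape b) hn (by cases a <;> simp [shape])
    (by cases b <;> simp [shape]) (by
      intro j
      have h3 := (profile hn a j).2
      have h4 := (profile hn b j).2
      rw [hs, h1] at h3
      exact h3.symm.trans h4)
  exact ⟨h1, h2.1, h2.2⟩

/-- Codes with the same distances from all `s j` and from one `p j` are equal. -/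
lemma code_inj {n : ℕ} (hn : 4 ≤ n) (j₀ : Fin n) (a b : E n)
    (hs : ∀ j, val ((Dt n).dist (.s j)) a = val ((Dt n).dist (.s j)) b)
    (hp : val ((Dt n).dist (.p j₀)) a = val ((Dt n).dist (.p j₀)) b) : a = b := by
  obtain ⟨h1, h2, h3⟩ := code_idx hn a b hs
  obtain ⟨i, hi⟩ : ∃ i, i = idx a := ⟨_, rfl⟩
  obtain ⟨i', hi'⟩ := exists_pred i
  have e1 := hs i'
  have e2 := hs (finSucc i)
  have s1 := succ_val i
  have s2 := succ_val i'
  rw [hi'] at s2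
  have l1 := i.isLt
  have l2 := i'.isLt
  have r1 : 3 ≤ (Dt n).dist (.s i') (.r i) := by have := local_r hn i i'; omega
  have r2 : 3 ≤ (Dt n).dist (.s (finSucc i)) (.r i) := by
    have := local_r hn i (finSucc i); omega
  have t2 : (Dt n).dist (.s (finSucc i)) (.s i) = (Dt n).dist (.s (finSucc i)) (.r i) + 1 := by
    have := local_s hn i (finSucc i); omega
  have q1 : (Dt n).dist (.s i') (.q i) = 2 := by have := local_q hn i i'; omega
  have q2 : 3 ≤ (Dt n).dist (.s (finSucc i)) (.q i) := by
    have := local_q hn i (finSucc i); omega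
  have q3 : 3 ≤ (Dt n).dist (.s i') (.q (finSucc i)) := by
    have := local_q hn (finSucc i) i'; omega
  have q4 : (Dt n).dist (.s (finSucc i)) (.q (finSucc i)) = 2 := by
    have := local_q hn (finSucc i) (finSucc i); omega
  clear hs s1 s2
  cases a <;> cases b <;> simp only [low, shape, idx] at h1 h2 h3 hi <;> first | omega | skip
  all_goals subst h3 hi
  all_goals first
      | rfl
      | (exfalso; simp only [val, dist_p_q hn] at hp; clear r1 r2 t2 q1 q2 q3 q4 e1 e2; omega)
      | (exfalso; simp only [val] at e1 e2; clear hp; omega)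

lemma upper {n : ℕ} (hn : 4 ≤ n) (j₀ : Fin n) :
    IsMixedMetricGen (Dt n) (insert (.p j₀) (Set.range DtV.s)) := by
  intro a b hab
  by_contra! hcon
  obtain ⟨k, hk⟩ := exists_code a
  obtain ⟨l, hl⟩ := exists_code b
  have hkl : k = l := by
    apply code_inj hn j₀
    · intro j
      rw [← mixedDist_code _ a k hk, ← mixedDist_code _ b l hl]
      exact hcon _ (Set.mem_insert_of_mem _ ⟨j, rfl⟩)
    · rw [← mixedDist_code _ a k hk, ← mixedDist_code _ b l hl]
      exact hcon _ (Set.mem_insert _ _)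
  subst hkl
  exact hab (Sum.map_injective.2 ⟨Function.injective_id, Subtype.val_injective⟩ (hk.trans hl.symm))

instance finDtV (n : ℕ) : Finite (DtV n) := by
  let g : (Fin n ⊕ Fin n) ⊕ (Fin n ⊕ Fin n) → DtV n :=
    Sum.elim (Sum.elim .p .q) (Sum.elim .r .s)
  refine Finite.of_surjective g ?_
  intro v
  cases v with
  | p i => exact ⟨.inl (.inl i), rfl⟩
  | q i => exact ⟨.inl (.inr i), rfl⟩
  | r i => exact ⟨.inr (.inl i), rfl⟩
  | s i => exact ⟨.inr (.inr i), rfl⟩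

lemma ncard_base {n : ℕ} (w : DtV n) (hw : w ∉ Set.range (DtV.s (n := n))) :
    (insert w (Set.range (DtV.s (n := n)))).ncard = n + 1 := by
  rw [Set.ncard_insert_of_notMem hw (Set.toFinite _)]
  have : (Set.range (DtV.s (n := n))).ncard = n := by
    rw [← Set.image_univ, Set.ncard_image_of_injective _ (fun a b h => by simpa using h),
      Set.ncard_univ, Nat.card_fin]
  rw [this]

lemma lower {n : ℕ} (hn : 4 ≤ n) (M : Set (DtV n)) (hM : IsMixedMetricGen (Dt n) M) :
    n + 1 ≤ M.ncard := by
  have h1 : ∀ i, DtV.s i ∈ M := by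
    intro i
    obtain ⟨w, hw, hne⟩ := hM (.inl (.r i)) (.inr ⟨s(.r i, .s i), adj_rs i⟩) (by simp)
    rw [mixedDist_code w _ (.r i) rfl, mixedDist_code w _ (.rs i) rfl] at hne
    by_cases e : w = .s i
    · exact e ▸ hw
    · have := dist_s hn w i e
      simp only [val] at hne
      omega
  let i₀ : Fin n := ⟨0, by omega⟩
  obtain ⟨w, hw, hne⟩ := hM (.inl (.q i₀)) (.inr ⟨s(.p i₀, .q i₀), adj_pq i₀⟩) (by simp)
  rw [mixedDist_code w _ (.q i₀) rfl, mixedDist_code w _ (.pq i₀) rfl] at hne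
  have hws : w ∉ Set.range (DtV.s (n := n)) := by
    rintro ⟨j, rfl⟩
    have := dist_s_p hn i₀ j
    simp only [val] at hne
    omega
  rw [← ncard_base w hws]
  refine Set.ncard_le_ncard ?_ (Set.toFinite _)
  rintro x (rfl | ⟨j, rfl⟩)
  · exact hw
  · exact h1 j

end DtProof

theorem stmt4 (n : ℕ) (hn : 4 ≤ n) : mixedMetricDim (Dt n) = n + 1 := by
  unfold mixedMetricDim
  apply le_antisymm
  · exact Nat.sInf_le ⟨_, DtProof.upper hn ⟨0, by omega⟩, DtProof.ncard_base _ (by simp)⟩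
  · refine le_csInf ⟨_, _, DtProof.upper hn ⟨0, by omega⟩, rfl⟩ ?_
    rintro k ⟨M, hM, rfl⟩
    exact DtProof.lower hn M hM
end

section
/- For the prism allied graph D_n^t with n ≥ 4, the set {p_1, s_1, s_2, ..., s_n} is an independent set of vertices (no two of its vertices are adjacent) that is also a mixed metric generator; hence D_n^t admits an independent mixed metric generator of cardinality n + 1. -/
namespace DtAux

variable {n : ℕ}

theorem succ_val (i : Fin n) : (i.val + 1 < n ∧ (finSucc i).val = i.val + 1) ∨
    (i.val + 1 = n ∧ (finSucc i).val = 0) := by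
  have hi := i.isLt
  by_cases h : i.val + 1 < n
  · left; exact ⟨h, by simp [finSucc, Nat.mod_eq_of_lt h]⟩
  · right
    have : i.val + 1 = n := by omega
    exact ⟨this, by simp [finSucc, this]⟩

theorem succ_inj {i j : Fin n} (h : finSucc i = finSucc j) : i = j := by
  have h1 := succ_val i
  have h2 := succ_val j
  have h3 : (finSucc i).val = (finSucc j).val := by rw [h]
  apply Fin.ext; omega

theorem succ_surj (j : Fin n) : ∃ i : Fin n, finSucc i = j := by
  have hj := j.isLt
  by_cases h : j.val = 0
  · refine ⟨⟨n - 1, by omega⟩, Fin.ext ?_⟩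
    have := succ_val (⟨n - 1, by omega⟩ : Fin n)
    simp only at this
    omega
  · refine ⟨⟨j.val - 1, by omega⟩, Fin.ext ?_⟩
    have := succ_val (⟨j.val - 1, by omega⟩ : Fin n)
    simp only at this
    omega

theorem succ_ne (hn : 4 ≤ n) (i : Fin n) : finSucc i ≠ i := by
  intro h
  have h1 := succ_val i
  rw [h] at h1
  omega

theorem succ_ne2 (hn : 4 ≤ n) (i : Fin n) : finSucc (finSucc i) ≠ i := by
  intro h
  have h1 := succ_val i
  have h2 := succ_val (finSucc i)
  rw [h] at h2
  omega

theorem succ_ne3 (hn : 4 ≤ n) (i : Fin n) : finSucc (finSucc (finSucc i)) ≠ i := by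
  intro h
  have h1 := succ_val i
  have h2 := succ_val (finSucc i)
  have h3 := succ_val (finSucc (finSucc i))
  rw [h] at h3
  omega

theorem adj_of_rel (hn : 4 ≤ n) {a b : DtV n} (h : DtRel n a b) : (Dt n).Adj a b := by
  refine (SimpleGraph.fromRel_adj _ _ _).2 ⟨?_, Or.inl h⟩
  obtain ⟨i, h | h | h | h | h | h⟩ := h <;> obtain ⟨rfl, rfl⟩ := h <;> simp
  · exact (succ_ne hn i).symm
  · exact (succ_ne hn i).symm

theorem adj_pq (hn : 4 ≤ n) (i : Fin n) : (Dt n).Adj (.p i) (.q i) :=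
  adj_of_rel hn ⟨i, by simp⟩
theorem adj_pp (hn : 4 ≤ n) (i : Fin n) : (Dt n).Adj (.p i) (.p (finSucc i)) :=
  adj_of_rel hn ⟨i, by simp⟩
theorem adj_qq (hn : 4 ≤ n) (i : Fin n) : (Dt n).Adj (.q i) (.q (finSucc i)) :=
  adj_of_rel hn ⟨i, by simp⟩
theorem adj_rq (hn : 4 ≤ n) (i : Fin n) : (Dt n).Adj (.r i) (.q i) :=
  adj_of_rel hn ⟨i, by simp⟩
theorem adj_rq' (hn : 4 ≤ n) (i : Fin n) : (Dt n).Adj (.r i) (.q (finSucc i)) :=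
  adj_of_rel hn ⟨i, by simp⟩
theorem adj_rs (hn : 4 ≤ n) (i : Fin n) : (Dt n).Adj (.r i) (.s i) :=
  adj_of_rel hn ⟨i, by simp⟩

theorem reach_p (hn : 4 ≤ n) (k : ℕ) (hk : k < n) :
    (Dt n).Reachable (.p ⟨0, by omega⟩) (.p ⟨k, hk⟩) := by
  induction k with
  | zero => exact SimpleGraph.Reachable.refl _
  | succ k ih =>
    refine (ih (by omega)).trans ?_
    have h := (adj_pp hn ⟨k, by omega⟩).reachable
    have e : finSucc (⟨k, by omega⟩ : Fin n) = ⟨k + 1, hk⟩ := by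
      apply Fin.ext; simp [finSucc, Nat.mod_eq_of_lt hk]
    rwa [e] at h

theorem conn (hn : 4 ≤ n) : (Dt n).Connected := by
  have key : ∀ v, (Dt n).Reachable (.p ⟨0, by omega⟩) v := by
    have hp : ∀ i : Fin n, (Dt n).Reachable (.p ⟨0, by omega⟩) (.p i) :=
      fun i => reach_p hn i.val i.isLt
    have hq : ∀ i : Fin n, (Dt n).Reachable (.p ⟨0, by omega⟩) (.q i) :=
      fun i => (hp i).trans (adj_pq hn i).reachable
    have hr : ∀ i : Fin n, (Dt n).Reachable (.p ⟨0, by omega⟩) (.r i) :=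
      fun i => (hq i).trans (adj_rq hn i).symm.reachable
    rintro (i | i | i | i)
    · exact hp i
    · exact hq i
    · exact hr i
    · exact (hr i).trans (adj_rs hn i).reachable
  have : Nonempty (DtV n) := ⟨.p ⟨0, by omega⟩⟩
  exact ⟨fun u v => (key u).symm.trans (key v)⟩

/-- A function which is 1-Lipschitz along edges and vanishes at `w` bounds the distance below. -/
theorem le_dist (hn : 4 ≤ n) (g : DtV n → ℕ) (w : DtV n) (h0 : g w = 0)
    (hL : ∀ a b, DtRel n a b → g a ≤ g b + 1 ∧ g b ≤ g a + 1) (v : DtV n) :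
    g v ≤ (Dt n).dist w v := by
  have key : ∀ {u v : DtV n} (p : (Dt n).Walk u v), g v ≤ g u + p.length := by
    intro u v p
    induction p with
    | nil => simp
    | cons h p ih =>
      rw [SimpleGraph.Walk.length_cons]
      rcases ((SimpleGraph.fromRel_adj _ _ _).1 h).2 with h | h
      · have := hL _ _ h; omega
      · have := hL _ _ h; omega
  obtain ⟨p, hp⟩ := (conn hn).exists_walk_length_eq_dist w v
  have := key p
  omega

theorem dist_step (hn : 4 ≤ n) (w : DtV n) {u v : DtV n} (h : (Dt n).Adj u v) :
    (Dt n).dist w v ≤ (Dt n).dist w u + 1 := by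
  have h1 := (conn hn).dist_triangle (u := w) (v := u) (w := v)
  have h2 := SimpleGraph.dist_eq_one_iff_adj.2 h
  omega

theorem dist_q (hn : 4 ≤ n) (z i : Fin n) :
    (Dt n).dist (.p z) (.p i) < (Dt n).dist (.p z) (.q i) := by
  let c : Fin n → ℕ := fun i => (Dt n).dist (.p z) (.p i)
  have hc : ∀ i, c i ≤ c (finSucc i) + 1 ∧ c (finSucc i) ≤ c i + 1 := fun i =>
    ⟨dist_step hn _ (adj_pp hn i).symm, dist_step hn _ (adj_pp hn i)⟩
  let g : DtV n → ℕ := fun v => match v with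
    | .p i => c i
    | .q i => c i + 1
    | .r i => min (c i) (c (finSucc i)) + 2
    | .s i => min (c i) (c (finSucc i)) + 3
  have := le_dist hn g (.p z) (by simp [g, c]) (by
    rintro a b ⟨i, h | h | h | h | h | h⟩ <;> obtain ⟨rfl, rfl⟩ := h <;> simp only [g] <;>
      have := hc i <;> omega) (.q i)
  simp only [g, c] at this
  omega

/-- The distance from `s_j`, truncated at `4`. -/
def h (j : Fin n) : DtV n → ℕ
  | .p i => if i = j ∨ i = finSucc j then 3 else 4
  | .q i => if i = j ∨ i = finSucc j then 2 else
      if finSucc i = j ∨ i = finSucc (finSucc j) then 3 else 4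
  | .r i => if i = j then 1 else if finSucc i = j ∨ i = finSucc j then 3 else 4
  | .s i => if i = j then 0 else 4

theorem min_dist (hn : 4 ≤ n) (j : Fin n) (v : DtV n) :
    min ((Dt n).dist (.s j) v) 4 = h j v := by
  have lower := le_dist hn (h j) (.s j) (by simp [h]) (by
    have inj : ∀ i j : Fin n, finSucc i = finSucc j → i = j := fun _ _ => succ_inj
    rintro a b ⟨i, h | h | h | h | h | h⟩ <;> obtain ⟨rfl, rfl⟩ := h <;> simp only [h] <;>
      grind) v
  have s0 : (Dt n).dist (.s j) (.s j) = 0 := by simp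
  have r1 := dist_step hn (.s j) (adj_rs hn j).symm
  have q1 := dist_step hn (.s j) (adj_rq hn j)
  have q2 := dist_step hn (.s j) (adj_rq' hn j)
  have p1 := dist_step hn (.s j) (adj_pq hn j).symm
  have p2 := dist_step hn (.s j) (adj_pq hn (finSucc j)).symm
  have q3 := dist_step hn (.s j) (adj_qq hn (finSucc j))
  have r2 := dist_step hn (.s j) (adj_rq hn (finSucc j)).symm
  obtain ⟨k, rfl⟩ := succ_surj j
  have q4 := dist_step hn (.s (finSucc k)) (adj_qq hn k).symm
  have r3 := dist_step hn (.s (finSucc k)) (adj_rq' hn k).symm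
  have inj : ∀ i j : Fin n, finSucc i = finSucc j → i = j := fun _ _ => succ_inj
  rcases v with i | i | i | i <;> simp only [h] at lower ⊢ <;> split_ifs at lower ⊢ <;> grind

/-- The ten kinds of elements (vertices and edges). -/
inductive Kind
  | p | q | r | s | pq | pp | qq | rq | rq' | rs

def el : Kind → Fin n → DtV n ⊕ Sym2 (DtV n)
  | .p, i => .inl (.p i)
  | .q, i => .inl (.q i)
  | .r, i => .inl (.r i)
  | .s, i => .inl (.s i)
  | .pq, i => .inr s(.p i, .q i)
  | .pp, i => .inr s(.p i, .p (finSucc i))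
  | .qq, i => .inr s(.q i, .q (finSucc i))
  | .rq, i => .inr s(.r i, .q i)
  | .rq', i => .inr s(.r i, .q (finSucc i))
  | .rs, i => .inr s(.r i, .s i)

def T (j : Fin n) : Kind → Fin n → ℕ
  | .p, i => h j (.p i)
  | .q, i => h j (.q i)
  | .r, i => h j (.r i)
  | .s, i => h j (.s i)
  | .pq, i => min (h j (.p i)) (h j (.q i))
  | .pp, i => min (h j (.p i)) (h j (.p (finSucc i)))
  | .qq, i => min (h j (.q i)) (h j (.q (finSucc i)))
  | .rq, i => min (h j (.r i)) (h j (.q i))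
  | .rq', i => min (h j (.r i)) (h j (.q (finSucc i)))
  | .rs, i => min (h j (.r i)) (h j (.s i))

/-- The element underlying a mixed element. -/
def under (a : DtV n ⊕ (Dt n).edgeSet) : DtV n ⊕ Sym2 (DtV n) := Sum.map id Subtype.val a

theorem under_inj : Function.Injective (under (n := n)) :=
  Function.Injective.sumMap Function.injective_id Subtype.val_injective

noncomputable def md (w : DtV n) : DtV n ⊕ Sym2 (DtV n) → ℕ :=
  Sum.elim ((Dt n).dist w) (edgeDist (Dt n) w)

theorem md_under (w : DtV n) (a : DtV n ⊕ (Dt n).edgeSet) :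
    mixedDist (Dt n) w a = md w (under a) := by
  rcases a with a | a <;> rfl

theorem exists_el (a : DtV n ⊕ (Dt n).edgeSet) : ∃ k i, under a = el k i := by
  rcases a with (i | i | i | i) | ⟨e, he⟩
  · exact ⟨.p, i, rfl⟩
  · exact ⟨.q, i, rfl⟩
  · exact ⟨.r, i, rfl⟩
  · exact ⟨.s, i, rfl⟩
  · have key : ∀ a b, DtRel n a b →
        ∃ k i, (Sum.inr s(a, b) : DtV n ⊕ Sym2 (DtV n)) = el k i := by
      rintro a b ⟨i, h | h | h | h | h | h⟩ <;> obtain ⟨rfl, rfl⟩ := h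
      · exact ⟨.pq, i, rfl⟩
      · exact ⟨.pp, i, rfl⟩
      · exact ⟨.qq, i, rfl⟩
      · exact ⟨.rq, i, rfl⟩
      · exact ⟨.rq', i, rfl⟩
      · exact ⟨.rs, i, rfl⟩
    induction e using Sym2.ind with
    | _ u v =>
      rcases ((SimpleGraph.fromRel_adj _ _ _).1 he).2 with h | h
      · exact key u v h
      · obtain ⟨k, i, hk⟩ := key v u h
        refine ⟨k, i, ?_⟩
        rw [← hk]
        exact congrArg Sum.inr Sym2.eq_swap

theorem md_el (hn : 4 ≤ n) (j : Fin n) (k : Kind) (i : Fin n) :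
    min (md (.s j) (el k i)) 4 = T j k i := by
  cases k <;> simp only [T, ← min_dist hn] <;> simp [md, el, edgeDist]

/-- Truncated distances of an element of index `i` from `s_{i-1}`, `s_i`, `s_{i+1}`, and a lower
bound for the truncated distance from all other `s_j`. -/
def prof : Kind → ℕ × ℕ × ℕ × ℕ
  | .p => (3, 3, 4, 4)
  | .q => (2, 2, 3, 3)
  | .r => (3, 1, 3, 3)
  | .s => (4, 0, 4, 4)
  | .pq => (2, 2, 3, 3)
  | .pp => (3, 3, 3, 4)
  | .qq => (2, 2, 2, 3)
  | .rq => (2, 1, 3, 3)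
  | .rq' => (3, 1, 2, 3)
  | .rs => (3, 0, 3, 3)

theorem T_prof (hn : 4 ≤ n) (k : Kind) (m : Fin n) :
    T m k (finSucc m) = (prof k).1 ∧ T (finSucc m) k (finSucc m) = (prof k).2.1 ∧
    T (finSucc (finSucc m)) k (finSucc m) = (prof k).2.2.1 ∧
    ∀ j, j ≠ m → j ≠ finSucc m → j ≠ finSucc (finSucc m) →
      (prof k).2.2.2 ≤ T j k (finSucc m) := by
  have n1 := succ_ne hn
  have n2 := succ_ne2 hn
  have n3 := succ_ne3 hn
  have e : ∀ i j : Fin n, finSucc i = finSucc j ↔ i = j :=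
    fun _ _ => ⟨succ_inj, congrArg _⟩
  have n1' := fun i => (n1 i).symm
  have n2' := fun i => (n2 i).symm
  have n3' := fun i => (n3 i).symm
  refine ⟨?_, ?_, ?_, ?_⟩
  · cases k <;> simp [T, h, prof, e, n1, n2, n3, n1', n2', n3']
  · cases k <;> simp [T, h, prof, e, n1, n2, n3, n1', n2', n3']
  · cases k <;> simp [T, h, prof, e, n1, n2, n3, n1', n2', n3']
  · intro j h1 h2 h3
    have h1' := h1.symm
    have h2' := h2.symm
    have h3' := h3.symm
    cases k <;> simp [T, h, prof, e, h1', h2', h3'] <;> (try split_ifs) <;> simp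

theorem T_aux (hn : 4 ≤ n) (k k' : Kind) (m : Fin n)
    (H : ∀ j, T j k (finSucc m) = T j k' (finSucc (finSucc m))) : False := by
  have e : ∀ i j : Fin n, finSucc i = finSucc j ↔ i = j :=
    fun _ _ => ⟨succ_inj, congrArg _⟩
  obtain ⟨x, y, z, o⟩ := T_prof hn k m
  obtain ⟨x', y', z', o'⟩ := T_prof hn k' (finSucc m)
  have c1 := o' m (succ_ne hn _).symm (succ_ne2 hn _).symm (succ_ne3 hn _).symm
  have c2 := o (finSucc (finSucc (finSucc m))) (succ_ne3 hn _) (succ_ne2 hn _) (succ_ne hn _)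
  rw [← H] at x' y' z' c1
  rw [z'] at c2
  rw [y] at x'
  rw [z] at y'
  rw [x] at c1
  clear x y z z' o o' H
  cases k <;> cases k' <;> simp [prof] at x' y' c1 c2

theorem T_sep (hn : 4 ≤ n) (k k' : Kind) (i i' : Fin n) (H : ∀ j, T j k i = T j k' i') :
    i = i' ∧ (k = k' ∨ (k = .q ∧ k' = .pq) ∨ (k = .pq ∧ k' = .q)) := by
  obtain ⟨m, rfl⟩ := succ_surj i
  obtain ⟨m', rfl⟩ := succ_surj i'
  obtain ⟨x, y, z, o⟩ := T_prof hn k m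
  obtain ⟨x', y', z', o'⟩ := T_prof hn k' m'
  by_cases h1 : m' = m
  · subst h1
    refine ⟨rfl, ?_⟩
    rw [H, x'] at x
    rw [H, y'] at y
    rw [H, z'] at z
    clear x' y' z' o o' H
    cases k <;> cases k' <;> simp [prof] at x y z ⊢
  exfalso
  by_cases h2 : m' = finSucc m
  · subst h2
    exact T_aux hn k k' m H
  by_cases h3 : m = finSucc m'
  · subst h3
    exact T_aux hn k' k m' (fun j => (H j).symm)
  have c1 := o (finSucc m') (Ne.symm h3) (fun h => h1 (succ_inj h)) (fun h => h2 (succ_inj h))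
  have c2 := o' (finSucc m) (Ne.symm h2) (fun h => h1 (succ_inj h).symm)
    (fun h => h3 (succ_inj h))
  rw [H, y'] at c1
  rw [← H, y] at c2
  clear x x' y y' z z' o o' H
  cases k <;> cases k' <;> simp [prof] at c1 c2

end DtAux

theorem stmt5 (n : ℕ) (hn : 4 ≤ n) :
    (∀ a ∈ ({DtV.p ⟨0, by omega⟩} ∪ Set.range DtV.s : Set (DtV n)),
      ∀ b ∈ ({DtV.p ⟨0, by omega⟩} ∪ Set.range DtV.s : Set (DtV n)), ¬ (Dt n).Adj a b) ∧
    IsMixedMetricGen (Dt n) ({DtV.p ⟨0, by omega⟩} ∪ Set.range DtV.s) ∧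
    ({DtV.p ⟨0, by omega⟩} ∪ Set.range DtV.s : Set (DtV n)).ncard = n + 1 := by
  have hz : 0 < n := by omega
  refine ⟨?_, ?_, ?_⟩
  · have key : ∀ a ∈ ({DtV.p ⟨0, hz⟩} ∪ Set.range DtV.s : Set (DtV n)),
        ∀ b ∈ ({DtV.p ⟨0, hz⟩} ∪ Set.range DtV.s : Set (DtV n)), ¬ DtRel n a b := by
      rintro a (rfl | ⟨x, rfl⟩) b (rfl | ⟨y, rfl⟩) ⟨i, h⟩
      · simp only [DtV.p.injEq, reduceCtorEq, and_false, false_and, or_false, false_or] at h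
        have := DtAux.succ_ne hn i
        exact this (h.2.symm.trans h.1)
      all_goals simp at h
    intro a ha b hb h
    rcases ((SimpleGraph.fromRel_adj _ _ _).1 h).2 with h | h
    · exact key a ha b hb h
    · exact key b hb a ha h
  · intro a b hab
    by_contra! hcon
    apply hab
    apply DtAux.under_inj
    obtain ⟨k, i, hk⟩ := DtAux.exists_el a
    obtain ⟨k', i', hk'⟩ := DtAux.exists_el b
    have hw : ∀ w ∈ ({DtV.p ⟨0, hz⟩} ∪ Set.range DtV.s : Set (DtV n)),
        DtAux.md w (DtAux.el k i) = DtAux.md w (DtAux.el k' i') := by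
      intro w hw
      rw [← hk, ← hk', ← DtAux.md_under, ← DtAux.md_under]
      exact hcon w hw
    have hT := DtAux.T_sep hn k k' i i' (fun j => by
      rw [← DtAux.md_el hn, ← DtAux.md_el hn, hw _ (Or.inr ⟨j, rfl⟩)])
    have h0 := hw _ (Or.inl rfl)
    rw [hk, hk']
    obtain ⟨rfl, rfl | ⟨rfl, rfl⟩ | ⟨rfl, rfl⟩⟩ := hT
    · rfl
    · have := DtAux.dist_q hn ⟨0, hz⟩ i
      simp [DtAux.md, DtAux.el, edgeDist] at h0
      omega
    · have := DtAux.dist_q hn ⟨0, hz⟩ i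
      simp [DtAux.md, DtAux.el, edgeDist] at h0
      omega
  · have hinj : Function.Injective (DtV.s (n := n)) := fun x y h => by simpa using h
    rw [Set.singleton_union, Set.ncard_insert_of_notMem (by simp) (Set.finite_range _),
      ← Set.image_univ, Set.ncard_image_of_injective _ hinj, Set.ncard_univ]
    simp
end
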